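/- Let A be a unital C*-algebra, let k : ℕ → ℕ with k(n) ≥ 1 for all n, and let (π_n)_{n ∈ ℕ} be a family of unital star-algebra homomorphisms π_n : A → M_{k(n)}(ℂ) into complex matrix algebras which is separating: for every a ∈ A with a ≠ 0 there exists n with π_n(a) ≠ 0. Then A admits a faithful tracial state. -/

import Mathlib

/-!
The trace is the weighted average `τ a = ∑ₙ 2⁻⁽ⁿ⁺¹⁾ trₙ (πₙ a)`, where `trₙ` is the normalized trace
on `M_{k(n)}(ℂ)`. A star-homomorphism between C*-algebras is contractive, and every diagonal entry
of a matrix is bounded by its operator norm, so `|trₙ (πₙ a)| ≤ ‖a‖` (`norm_normalizedTrace_le`) and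
the series converges absolutely. Linearity, traciality and `τ 1 = 1` hold term by term. For
`τ (a* a)` every summand is nonnegative (`normalizedTrace_star_mul_self_nonneg`), so if the sum
vanishes then each `tr ((πₙ a)* (πₙ a))` vanishes; hence `πₙ a = 0` for all `n` and `a = 0` by
separation.
-/

open scoped Matrix.Norms.L2Operator ComplexOrder

namespace RFDTrace

lemma norm_diag_le {m : ℕ} (M : Matrix (Fin m) (Fin m) ℂ) (i : Fin m) : ‖M i i‖ ≤ ‖M‖ := by
  have h1 := M.l2_opNorm_mulVec (EuclideanSpace.single i (1 : ℂ))
  have h2 := PiLp.norm_apply_le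
    ((EuclideanSpace.equiv (Fin m) ℂ).symm (M.mulVec (EuclideanSpace.single i (1 : ℂ)))) i
  have h3 := h2.trans h1
  simpa using h3

/-- The trace of `φ a` divided by the size `m` of the matrices, for a representation `φ` of `A` on
`m × m` matrices. It is identically `0` in the degenerate case `m = 0`. -/
noncomputable def normalizedTrace {A : Type*} [Ring A] [StarRing A] [Algebra ℂ A] {m : ℕ}
    (φ : A →⋆ₐ[ℂ] Matrix (Fin m) (Fin m) ℂ) : A →ₗ[ℂ] ℂ :=
  ((m : ℂ)⁻¹) • (Matrix.traceLinearMap (Fin m) ℂ ℂ ∘ₗ φ.toAlgHom.toLinearMap)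

section Algebraic

variable {A : Type*} [Ring A] [StarRing A] [Algebra ℂ A] {m : ℕ}
  (φ : A →⋆ₐ[ℂ] Matrix (Fin m) (Fin m) ℂ)

lemma normalizedTrace_apply (a : A) : normalizedTrace φ a = (m : ℂ)⁻¹ * (φ a).trace := rfl

lemma normalizedTrace_one (hm : 1 ≤ m) : normalizedTrace φ 1 = 1 := by
  have : (m : ℂ) ≠ 0 := by exact_mod_cast (by omega : m ≠ 0)
  simp [normalizedTrace_apply, this]

lemma normalizedTrace_mul_comm (a b : A) :
    normalizedTrace φ (a * b) = normalizedTrace φ (b * a) := by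
  rw [normalizedTrace_apply, normalizedTrace_apply, map_mul, map_mul, Matrix.trace_mul_comm]

lemma normalizedTrace_star_mul_self_nonneg (a : A) : 0 ≤ normalizedTrace φ (star a * a) := by
  rw [normalizedTrace_apply, map_mul, map_star]
  have h := (Matrix.posSemidef_conjTranspose_mul_self (φ a)).trace_nonneg
  have h' : (0 : ℂ) ≤ (m : ℂ)⁻¹ := by
    rw [← Complex.ofReal_natCast, ← Complex.ofReal_inv]
    exact Complex.zero_le_real.2 (by positivity)
  exact mul_nonneg h' h

lemma eq_zero_of_normalizedTrace_star_mul_self (hm : 1 ≤ m) {a : A}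
    (h : normalizedTrace φ (star a * a) = 0) : φ a = 0 := by
  have hm' : (m : ℂ) ≠ 0 := by exact_mod_cast (by omega : m ≠ 0)
  rw [normalizedTrace_apply, map_mul, map_star] at h
  have h' := (mul_eq_zero.1 h).resolve_left (inv_ne_zero hm')
  exact Matrix.trace_conjTranspose_mul_self_eq_zero_iff.1 h'

end Algebraic

lemma norm_normalizedTrace_le {A : Type*} [CStarAlgebra A] {m : ℕ}
    (φ : A →⋆ₐ[ℂ] Matrix (Fin m) (Fin m) ℂ) (a : A) : ‖normalizedTrace φ a‖ ≤ ‖a‖ := by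
  have h1 : ‖(φ a).trace‖ ≤ m * ‖a‖ := by
    calc ‖(φ a).trace‖ ≤ ∑ i, ‖φ a i i‖ := norm_sum_le _ _
      _ ≤ ∑ _i : Fin m, ‖a‖ := Finset.sum_le_sum fun i _ =>
          (norm_diag_le _ i).trans (NonUnitalStarAlgHom.norm_apply_le φ a)
      _ = m * ‖a‖ := by simp
  rw [normalizedTrace_apply, norm_mul, norm_inv, Complex.norm_natCast]
  exact inv_mul_le_of_le_mul₀ (by positivity) (norm_nonneg a) h1

/-- The `n`-th weight `2⁻⁽ⁿ⁺¹⁾`. -/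
noncomputable def weight (n : ℕ) : ℝ := 1 / 2 / 2 ^ n

lemma weight_pos (n : ℕ) : 0 < weight n := by unfold weight; positivity

lemma hasSum_weight : HasSum weight 1 := hasSum_geometric_two' 1

lemma summable_weight_mul {A : Type*} [CStarAlgebra A] {k : ℕ → ℕ}
    (π : ∀ n : ℕ, A →⋆ₐ[ℂ] Matrix (Fin (k n)) (Fin (k n)) ℂ) (a : A) :
    Summable fun n => (weight n : ℂ) * normalizedTrace (π n) a := by
  refine Summable.of_norm_bounded (hasSum_weight.summable.mul_right ‖a‖) fun n => ?_
  rw [norm_mul, Complex.norm_real, Real.norm_of_nonneg (weight_pos n).le]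
  exact mul_le_mul_of_nonneg_left (norm_normalizedTrace_le _ _) (weight_pos n).le

/-- The functional `a ↦ ∑ₙ 2⁻⁽ⁿ⁺¹⁾ trₙ (πₙ a)`. -/
noncomputable def traceState {A : Type*} [CStarAlgebra A] {k : ℕ → ℕ}
    (π : ∀ n : ℕ, A →⋆ₐ[ℂ] Matrix (Fin (k n)) (Fin (k n)) ℂ) : A →ₗ[ℂ] ℂ where
  toFun a := ∑' n, (weight n : ℂ) * normalizedTrace (π n) a
  map_add' a b := by
    rw [← (summable_weight_mul π a).tsum_add (summable_weight_mul π b)]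
    simp only [map_add, mul_add]
  map_smul' c a := by
    simp only [map_smul, smul_eq_mul, RingHom.id_apply]
    rw [← tsum_mul_left]
    exact tsum_congr fun n => by ring

end RFDTrace

open RFDTrace in
/-- A unital C*-algebra with a separating sequence of finite-dimensional representations
(i.e. a residually finite-dimensional unital C*-algebra) admits a faithful tracial state. -/
theorem rfd_admits_faithful_tracial_state
    {A : Type*} [NormedRing A] [StarRing A] [CStarRing A] [NormedAlgebra ℂ A]
    [StarModule ℂ A] [CompleteSpace A]
    (k : ℕ → ℕ) (hk : ∀ n, 1 ≤ k n)
    (π : ∀ n : ℕ, A →⋆ₐ[ℂ] Matrix (Fin (k n)) (Fin (k n)) ℂ)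
    (hsep : ∀ a : A, a ≠ 0 → ∃ n, π n a ≠ 0) :
    ∃ τ : A →ₗ[ℂ] ℂ, τ 1 = 1 ∧
      (∀ a : A, ∃ r : ℝ, 0 ≤ r ∧ τ (star a * a) = (r : ℂ)) ∧
      (∀ a b : A, τ (a * b) = τ (b * a)) ∧
      (∀ a : A, τ (star a * a) = 0 → a = 0) := by
  let _ : CStarAlgebra A := {}
  have hterm (a : A) (n : ℕ) : 0 ≤ (weight n : ℂ) * normalizedTrace (π n) (star a * a) :=
    mul_nonneg (Complex.zero_le_real.2 (weight_pos n).le)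
      (normalizedTrace_star_mul_self_nonneg (π n) a)
  refine ⟨traceState π, ?_, fun a => ?_, fun a b => ?_, fun a ha => ?_⟩
  · change ∑' n, (weight n : ℂ) * normalizedTrace (π n) 1 = 1
    simp only [normalizedTrace_one (π _) (hk _), mul_one]
    rw [← Complex.ofReal_tsum, hasSum_weight.tsum_eq, Complex.ofReal_one]
  · have h : 0 ≤ traceState π (star a * a) := tsum_nonneg (hterm a)
    obtain ⟨hre, him⟩ := Complex.nonneg_iff.1 h
    exact ⟨_, hre, Complex.ext rfl (by simpa using him.symm)⟩
  · exact tsum_congr fun n => by rw [normalizedTrace_mul_comm]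
  · by_contra hne
    obtain ⟨n, hn⟩ := hsep a hne
    have hs : HasSum (fun n => (weight n : ℂ) * normalizedTrace (π n) (star a * a)) 0 := by
      have := (summable_weight_mul π (star a * a)).hasSum
      rwa [show ∑' n, (weight n : ℂ) * normalizedTrace (π n) (star a * a) = 0 from ha] at this
    have h0 := congrFun ((hasSum_zero_iff_of_nonneg (hterm a)).1 hs) n
    have hw : (weight n : ℂ) ≠ 0 := Complex.ofReal_ne_zero.2 (weight_pos n).ne'
    exact hn (eq_zero_of_normalizedTrace_star_mul_self (π n) (hk n)
      ((mul_eq_zero.1 h0).resolve_left hw))
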